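/- Let m ≥ 2 and c ≥ 2 be fixed integers. There exist a constant K = K(m,c) and s0 = s0(m,c) such that for all s ≥ s0, with n = ms + c and ℓ = s − c: if F ⊆ 2^{[n]} is a shifted family with ν(F) < s and F ⊄ Q(m,s,ℓ), then y_F(m) + y_F(m+1) ≥ (2c+2)·C(n, m−1) − K·s^{m−2}. -/

import Mathlib

/-!
Write `m = μ + 1` and `n = m s + c`. Fix a constant `L = L(m, c)`, a constant `N₀`, and the block
`Y = (N₀, N₀ + μ]`. A tail `E`, that is a singleton or a pair among the last `L` points, is called
good if `Y ∪ E ∈ F`. By shiftedness a good tail may be completed by any `μ`-subset of `[1, N₀]`,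
whereas a bad tail is missing together with every `μ`-subset of the middle of the ground set, which
costs `C(n, μ) - O(s ^ (μ - 1))` missing sets (`card_tails_mul_le`). Hence, if the asserted bound
fails, fewer than `2c + 2` tails within the last `2c + 2` points are bad. For the same reason the
`m`-sets `{lo + k, lo + 2k, …, lo + mk}` with `lo + mk = n - L` and `k = s - O(1)` lie in `F`:
otherwise all `L` last singletons would be missing together with a positive proportion of the
`μ`-sets, and `L` is chosen so large that this is too much. The shifts of such a set partition the
interval `(lo, n - L]`, so an `s`-matching of `F` is obtained as soon as enough disjoint good tails
are found (`exists_matching`); the number of sets needed on the last `L` points is `L - c`.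

Let `a` be the number of bad singletons, so `a ≤ 2c + 1`. If `a ≤ 2c`, then with `k = a - c`
disjoint good pairs among the last `c + k` points there would be an `s`-matching. So one of the
nested pairs of the first `2k` of these points is bad. Every pair above it is then bad too,
including the `c` pairs consisting of `n` and one of its `c` predecessors (and one pair more if
`k = 1`), which gives at least `2c + 2` bad tails in total. If `a = 2c + 1`, then all pairs are good. A
member `P` of `F` outside `Q(m,s,ℓ)`, with `b` points in `[n - 2c - 1]` and `q` beyond, satisfies
`2b + q ≤ 2m - 1`; it uses up so few small points that together with good pairs covering the rest of
the last `2c + 1` points it again extends to an `s`-matching (`subset_Qfam`).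
-/

open Finset

/-- The ground set `[n] = {1, …, n}`. -/
def ground (n : ℕ) : Finset ℕ := Finset.Icc 1 n

/-- `F` contains a matching of size `s`: `s` pairwise disjoint member sets. -/
def HasMatching (F : Finset (Finset ℕ)) (s : ℕ) : Prop :=
  ∃ M ⊆ F, M.card = s ∧ (M : Set (Finset ℕ)).PairwiseDisjoint id

/-- `A = (a₁ < … < a_k)` can be shifted to `B = (b₁ < … < b_k)`: same size and `bᵢ ≤ aᵢ`. -/
def CanShiftTo (A B : Finset ℕ) : Prop :=
  ∃ h : B.card = A.card, ∀ i : Fin A.card,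
    B.orderEmbOfFin h i ≤ A.orderEmbOfFin (rfl : A.card = A.card) i

/-- A family of subsets of the positive integers is shifted. -/
def IsShifted (F : Finset (Finset ℕ)) : Prop :=
  ∀ A ∈ F, ∀ B : Finset ℕ, 0 ∉ B → CanShiftTo A B → B ∈ F

/-- `Q(m,s,ℓ) = {P ⊆ [ms+c] : |P| + |P ∩ [ms−c−1]| ≥ 2m}` where `ℓ = s − c`. -/
def Qfam (m s c : ℕ) : Finset (Finset ℕ) :=
  (ground (m * s + c)).powerset.filter
    (fun P => 2 * m ≤ P.card + (P ∩ ground (m * s - c - 1)).card)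

/-- `W(m,s,ℓ) = {P ⊆ [ms+c] : |P ∩ [ms−1]| ≥ m}`. -/
def Wfam (m s c : ℕ) : Finset (Finset ℕ) :=
  (ground (m * s + c)).powerset.filter
    (fun P => m ≤ (P ∩ ground (m * s - 1)).card)

/-- `P(m,s,ℓ) = {P ⊆ [ms+c] : |P| + |P ∩ [ℓ−1]| ≥ m+1}` where `ℓ = s − c`. -/
def Pfam (m s c : ℕ) : Finset (Finset ℕ) :=
  (ground (m * s + c)).powerset.filter
    (fun P => m + 1 ≤ P.card + (P ∩ ground (s - c - 1)).card)

/-- `P'(m,s,ℓ) = ⋃_{i=m+1}^n ([n] choose i) ∪ ([mℓ−1] choose m)` where `ℓ = s − c`. -/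
def P'fam (m s c : ℕ) : Finset (Finset ℕ) :=
  (ground (m * s + c)).powerset.filter
    (fun P => m + 1 ≤ P.card ∨ (P.card = m ∧ P ⊆ ground (m * (s - c) - 1)))

/-- The deletion number `d(F)`: the least size of a set `X ⊆ [n]` whose removal kills
all `ℓ`-matchings in the `m`-th layer of `F`. -/
noncomputable def delNum (n m ℓ : ℕ) (F : Finset (Finset ℕ)) : ℕ :=
  sInf {d : ℕ | ∃ X ⊆ ground n, X.card = d ∧
    ¬ HasMatching (F.filter (fun A => A.card = m ∧ A ⊆ ground n \ X)) ℓ}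

/-- `y_F(i)`: the number of `i`-element subsets of `[n]` not in `F`. -/
def yF (n : ℕ) (F : Finset (Finset ℕ)) (i : ℕ) : ℕ :=
  (((ground n).powerset.filter (fun A => A.card = i)) \ F).card

/-! ### Shifts via counting -/

/-- Domination order on finite sets of naturals, in counting form: `A` and `B` have the same size
and every initial segment contains at least as many elements of `B` as of `A`.  This is equivalent
to the elementwise comparison of the sorted sets, but is additive over disjoint unions. -/
def Dom (A B : Finset ℕ) : Prop :=
  A.card = B.card ∧ ∀ x, (A.filter (· ≤ x)).card ≤ (B.filter (· ≤ x)).card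

lemma Dom.canShiftTo {A B : Finset ℕ} (h : Dom A B) : CanShiftTo A B := by
  refine ⟨h.1.symm, fun i => ?_⟩
  by_contra hlt
  push Not at hlt
  set x := A.orderEmbOfFin rfl i with hx
  have h1 : (i : ℕ) + 1 ≤ (A.filter (· ≤ x)).card := by
    have : ((Finset.Iic i).image (A.orderEmbOfFin rfl)) ⊆ A.filter (· ≤ x) := by
      intro y hy
      obtain ⟨j, hj, rfl⟩ := Finset.mem_image.1 hy
      refine Finset.mem_filter.2 ⟨Finset.orderEmbOfFin_mem _ _ _, ?_⟩
      exact (A.orderEmbOfFin rfl).monotone (Finset.mem_Iic.1 hj)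
    have h2 := Finset.card_le_card this
    rwa [Finset.card_image_of_injective _ (A.orderEmbOfFin rfl).injective, Fin.card_Iic] at h2
  have h2 : (B.filter (· ≤ x)).card ≤ i := by
    have : B.filter (· ≤ x) ⊆ (Finset.Iio i).image (B.orderEmbOfFin h.1.symm) := by
      intro y hy
      obtain ⟨hyB, hyx⟩ := Finset.mem_filter.1 hy
      have : y ∈ Set.range (B.orderEmbOfFin h.1.symm) := by
        rw [Finset.range_orderEmbOfFin]; exact hyB
      obtain ⟨j, rfl⟩ := this
      refine Finset.mem_image.2 ⟨j, Finset.mem_Iio.2 ?_, rfl⟩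
      exact (B.orderEmbOfFin h.1.symm).lt_iff_lt.1 (lt_of_le_of_lt hyx hlt)
    have h3 := Finset.card_le_card this
    rwa [Finset.card_image_of_injective _ (B.orderEmbOfFin h.1.symm).injective, Fin.card_Iio] at h3
  have := h.2 x
  omega

lemma Dom.refl (A : Finset ℕ) : Dom A A := ⟨rfl, fun _ => le_rfl⟩

lemma Dom.union {A B A' B' : Finset ℕ} (h : Dom A B) (h' : Dom A' B') (hA : Disjoint A A')
    (hB : Disjoint B B') : Dom (A ∪ A') (B ∪ B') := by
  refine ⟨?_, fun x => ?_⟩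
  · rw [Finset.card_union_of_disjoint hA, Finset.card_union_of_disjoint hB, h.1, h'.1]
  · rw [Finset.filter_union, Finset.filter_union, Finset.card_union_of_disjoint
      (Finset.disjoint_filter_filter hA), Finset.card_union_of_disjoint
      (Finset.disjoint_filter_filter hB)]
    exact Nat.add_le_add (h.2 x) (h'.2 x)

lemma Dom.of_le {A B : Finset ℕ} (hc : A.card = B.card) (h : ∀ a ∈ A, ∀ b ∈ B, b ≤ a) :
    Dom A B := by
  refine ⟨hc, fun x => ?_⟩
  by_cases hx : ∃ a ∈ A, a ≤ x
  · obtain ⟨a, ha, hax⟩ := hx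
    have : B.filter (· ≤ x) = B :=
      Finset.filter_true_of_mem fun b hb => (h a ha b hb).trans hax
    rw [this, ← hc]
    exact Finset.card_filter_le _ _
  · push Not at hx
    rw [Finset.filter_false_of_mem (fun a ha => not_le.2 (hx a ha))]
    simp

lemma Dom.image {f g : ℕ → ℕ} {d : ℕ} (hf : Set.InjOn f (range d)) (hg : Set.InjOn g (range d))
    (h : ∀ i < d, g i ≤ f i) : Dom ((range d).image f) ((range d).image g) := by
  refine ⟨?_, fun x => ?_⟩
  · rw [Finset.card_image_of_injOn hf, Finset.card_image_of_injOn hg]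
  · rw [Finset.filter_image, Finset.filter_image, Finset.card_image_of_injOn,
      Finset.card_image_of_injOn]
    · apply Finset.card_le_card
      intro i hi
      simp only [Finset.mem_filter, Finset.mem_range] at hi ⊢
      exact ⟨hi.1, (h i hi.1).trans hi.2⟩
    · exact hg.mono (Finset.coe_subset.2 (Finset.filter_subset _ _))
    · exact hf.mono (Finset.coe_subset.2 (Finset.filter_subset _ _))

/-- A set above `u` can be shifted to the first points above `u`. -/
lemma Dom.compress {A : Finset ℕ} {u : ℕ} (h : ∀ a ∈ A, u < a) : Dom A (Ioc u (u + A.card)) := by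
  refine ⟨by simp, fun x => ?_⟩
  have h1 : (Ioc u (u + A.card)).filter (· ≤ x) = Ioc u (min (u + A.card) x) := by
    ext y; simp only [Finset.mem_filter, Finset.mem_Ioc, le_min_iff]; tauto
  have h2 : A.filter (· ≤ x) ⊆ Ioc u x := by
    intro y hy
    simp only [Finset.mem_filter, Finset.mem_Ioc] at hy ⊢
    exact ⟨h y hy.1, hy.2⟩
  have h3 := Finset.card_le_card h2
  have h4 := Finset.card_filter_le A (· ≤ x)
  rw [h1, Nat.card_Ioc]
  rw [Nat.card_Ioc] at h3
  omega

/-! ### Building a matching -/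

/-- Glues `r` special sets, each made of a block of `μ` small elements and a tail `E i` lying
above `n - L`, to a partition of the remaining interval of `(μ + 1) * k` elements into `k`
arithmetic progressions of difference `k`.  Each progression is a shift of the topmost one. -/
lemma exists_matching {F : Finset (Finset ℕ)} (hF : IsShifted F) {μ n e r L k N₀ : ℕ} (hμ : 1 ≤ μ)
    (E : ℕ → Finset ℕ) (hEL : ∀ i < r, ∀ t ∈ E i, n - L < t)
    (hEd : ∀ i < r, ∀ j < r, i < j → Disjoint (E i) (E j))
    (hlo : e + r * μ ≤ N₀) (hk : e + r * μ + (μ + 1) * k = n - L)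
    (hEF : ∀ i < r, ∀ X ⊆ Icc 1 N₀, X.card = μ → X ∪ E i ∈ F)
    (hB : (range (μ + 1)).image (fun i => e + r * μ + (i + 1) * k) ∈ F) :
    ∃ M ⊆ F, M.card = r + k ∧ (M : Set (Finset ℕ)).PairwiseDisjoint id ∧
      ∀ A ∈ M, A.Nonempty ∧ ∀ x ∈ A, (e < x ∧ x ≤ n - L) ∨ ∃ i < r, x ∈ E i := by
  set lo := e + r * μ with hlodef
  let X : ℕ → Finset ℕ := fun i => Ioc (e + i * μ) (e + i * μ + μ)
  let B : ℕ → Finset ℕ := fun j => (range (μ + 1)).image (fun i => lo + 1 + j + i * k)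
  let G : ℕ → Finset ℕ := fun x => if x < r then X x ∪ E x else B (x - r)
  have hX : ∀ i < r, ∀ x ∈ X i, e < x ∧ x ≤ lo := by
    intro i hi x hx
    have h1 : (i + 1) * μ ≤ r * μ := Nat.mul_le_mul_right _ hi
    rw [Nat.add_one_mul] at h1
    simp only [X, Finset.mem_Ioc] at hx
    omega
  have hBm : ∀ j < k, ∀ x ∈ B j, lo < x ∧ x ≤ n - L := by
    intro j hj x hx
    simp only [B, Finset.mem_image, Finset.mem_range] at hx
    obtain ⟨i, hi, rfl⟩ := hx
    have h1 : (i + 1) * k ≤ (μ + 1) * k := Nat.mul_le_mul_right _ hi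
    rw [Nat.add_one_mul] at h1
    omega
  have hGne : ∀ x < r + k, (G x).Nonempty := by
    intro x hx
    by_cases h : x < r
    · simp only [G, h, if_true]
      exact Finset.Nonempty.inl (by simp only [X, Finset.nonempty_Ioc]; omega)
    · simp only [G, h, if_false, B]
      simp
  have hGd : ∀ x < r + k, ∀ y < r + k, x < y → Disjoint (G x) (G y) := by
    intro x hx y hy hxy
    rw [Finset.disjoint_left]
    intro z hzx hzy
    by_cases h : x < r
    · by_cases h' : y < r
      · simp only [G, h, h', if_true, Finset.mem_union] at hzx hzy
        rcases hzx with hzx | hzx <;> rcases hzy with hzy | hzy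
        · have h1 : (x + 1) * μ ≤ y * μ := Nat.mul_le_mul_right _ hxy
          rw [Nat.add_one_mul] at h1
          simp only [X, Finset.mem_Ioc] at hzx hzy
          omega
        · have := hX x h z hzx
          have := hEL y h' z hzy
          omega
        · have := hX y h' z hzy
          have := hEL x h z hzx
          omega
        · exact Finset.disjoint_left.1 (hEd x h y h' hxy) hzx hzy
      · simp only [G, h, h', if_true, if_false, Finset.mem_union] at hzx hzy
        have h2 := hBm (y - r) (by omega) z hzy
        rcases hzx with hzx | hzx
        · have := hX x h z hzx
          omega
        · have := hEL x h z hzx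
          omega
    · have h' : ¬ y < r := by omega
      simp only [G, h, h', if_false, B, Finset.mem_image, Finset.mem_range] at hzx hzy
      -- The progressions lie in distinct residue classes modulo `k`.
      obtain ⟨i, -, h1⟩ := hzx
      obtain ⟨i', -, h2⟩ := hzy
      have h3 : (x - r) + i * k = (y - r) + i' * k := by omega
      have h4 := congrArg (· % k) h3
      simp only [Nat.add_mul_mod_self_right] at h4
      rw [Nat.mod_eq_of_lt (by omega), Nat.mod_eq_of_lt (by omega)] at h4
      omega
  have hGdne : ∀ x < r + k, ∀ y < r + k, x ≠ y → Disjoint (G x) (G y) := by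
    intro x hx y hy hxy
    rcases lt_or_gt_of_ne hxy with h | h
    · exact hGd x hx y hy h
    · exact (hGd y hy x hx h).symm
  have hinj : Set.InjOn G (range (r + k)) := by
    intro x hx y hy hxy
    simp only [Finset.coe_range, Set.mem_Iio] at hx hy
    by_contra hne
    have h1 := hGdne x hx y hy hne
    rw [← hxy, disjoint_self] at h1
    exact (hGne x hx).ne_empty h1
  refine ⟨(range (r + k)).image G, ?_, ?_, ?_, ?_⟩
  · intro A hA
    obtain ⟨x, hx, rfl⟩ := Finset.mem_image.1 hA
    rw [Finset.mem_range] at hx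
    by_cases h : x < r
    · simp only [G, h, if_true]
      refine hEF x h _ ?_ (by simp [X])
      intro y hy
      have := hX x h y hy
      rw [Finset.mem_Icc]
      omega
    · simp only [G, h, if_false]
      have hk0 : 0 < k := by omega
      have inj : ∀ u, Function.Injective (fun i => u + i * k) := by
        intro u i j hij
        exact Nat.eq_of_mul_eq_mul_right hk0 (Nat.add_left_cancel hij)
      refine hF _ hB _ ?_ (Dom.canShiftTo (Dom.image ?_ ?_ ?_))
      · intro h0
        have := hBm _ (by omega) _ h0
        omega
      · intro i _ j _ hij
        exact Nat.succ_injective (inj lo hij)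
      · exact (inj _).injOn
      · intro i _
        rw [Nat.add_one_mul]
        omega
  · rw [Finset.card_image_of_injOn hinj, Finset.card_range]
  · intro A hA A' hA' hne
    simp only [Finset.coe_image, Set.mem_image, Finset.coe_range, Set.mem_Iio] at hA hA'
    obtain ⟨x, hx, rfl⟩ := hA
    obtain ⟨y, hy, rfl⟩ := hA'
    exact hGdne x hx y hy (fun h => hne (by rw [h]))
  · intro A hA
    obtain ⟨x, hx, rfl⟩ := Finset.mem_image.1 hA
    rw [Finset.mem_range] at hx
    refine ⟨hGne x hx, fun z hz => ?_⟩
    by_cases h : x < r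
    · simp only [G, h, if_true, Finset.mem_union] at hz
      rcases hz with hz | hz
      · have := hX x h z hz
        left
        omega
      · exact Or.inr ⟨x, h, hz⟩
    · simp only [G, h, if_false] at hz
      have := hBm _ (by omega) z hz
      left
      omega

/-! ### Counting missing sets -/

/-- Missing sets can be counted by their tails: if every `X ∪ E` with `X` a `μ`-subset of `(N, H]`
and `E ∈ T` is missing, where the members of `T` are singletons or pairs above `H`, then the two
layers miss at least `|T| * C(H - N, μ)` sets. -/
lemma card_tails_mul_le {F T : Finset (Finset ℕ)} {μ n N H : ℕ} (hHn : H ≤ n)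
    (hT : ∀ E ∈ T, E ⊆ Ioc H n ∧ (E.card = 1 ∨ E.card = 2))
    (hmiss : ∀ E ∈ T, ∀ X ⊆ Ioc N H, X.card = μ → X ∪ E ∉ F) :
    T.card * (H - N).choose μ ≤ yF n F (μ + 1) + yF n F (μ + 2) := by
  have hd : ∀ E ∈ T, ∀ X ⊆ Ioc N H, Disjoint X E := by
    intro E hE X hX
    rw [Finset.disjoint_left]
    intro x h1 h2
    have h1 := Finset.mem_Ioc.1 (hX h1)
    have h2 := Finset.mem_Ioc.1 ((hT E hE).1 h2)
    omega
  have hinj : Set.InjOn (fun p : Finset ℕ × Finset ℕ => p.2 ∪ p.1)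
      (T ×ˢ (Ioc N H).powersetCard μ : Finset (Finset ℕ × Finset ℕ)) := by
    -- Both parts of `X ∪ E` are recovered by cutting it at `H`.
    have key : ∀ E ∈ T, ∀ X ⊆ Ioc N H,
        (X ∪ E).filter (H < ·) = E ∧ (X ∪ E).filter (¬ H < ·) = X := by
      intro E hE X hX
      have h1 : ∀ x ∈ X, ¬ H < x := fun x h => not_lt.2 (Finset.mem_Ioc.1 (hX h)).2
      have h2 : ∀ x ∈ E, H < x := fun x h => (Finset.mem_Ioc.1 ((hT E hE).1 h)).1
      constructor <;> ext x <;> simp only [Finset.mem_filter, Finset.mem_union] <;>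
        have := h1 x <;> have := h2 x <;> tauto
    rintro ⟨E, X⟩ hp ⟨E', X'⟩ hp' h
    simp only [Finset.coe_product, Set.mem_prod, Finset.mem_coe, Finset.mem_powersetCard] at hp hp'
    have k1 := key E hp.1 X hp.2.1
    have k2 := key E' hp'.1 X' hp'.2.1
    simp only at h
    rw [h] at k1
    rw [Prod.mk.injEq]
    exact ⟨k1.1.symm.trans k2.1, k1.2.symm.trans k2.2⟩
  have hsub : (T ×ˢ (Ioc N H).powersetCard μ).image (fun p => p.2 ∪ p.1) ⊆
      (((ground n).powerset.filter (fun A => A.card = μ + 1)) \ F) ∪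
      (((ground n).powerset.filter (fun A => A.card = μ + 2)) \ F) := by
    intro A hA
    obtain ⟨⟨E, X⟩, hp, rfl⟩ := Finset.mem_image.1 hA
    rw [Finset.mem_product, Finset.mem_powersetCard] at hp
    obtain ⟨hE, hX, hXc⟩ := hp
    simp only at hE hX hXc
    have hcard := Finset.card_union_of_disjoint (hd E hE X hX)
    have hsub : X ∪ E ⊆ ground n := by
      intro x hx
      rw [ground, Finset.mem_Icc]
      rcases Finset.mem_union.1 hx with h | h
      · have := Finset.mem_Ioc.1 (hX h)
        omega
      · have := Finset.mem_Ioc.1 ((hT E hE).1 h)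
        omega
    have hnot := hmiss E hE X hX hXc
    simp only [Finset.mem_union, Finset.mem_sdiff, Finset.mem_filter, Finset.mem_powerset]
    rcases (hT E hE).2 with h | h
    · exact Or.inl ⟨⟨hsub, by omega⟩, hnot⟩
    · exact Or.inr ⟨⟨hsub, by omega⟩, hnot⟩
  have h1 := (Finset.card_le_card hsub).trans (Finset.card_union_le _ _)
  rw [Finset.card_image_of_injOn hinj, Finset.card_product, Finset.card_powersetCard,
    Nat.card_Ioc] at h1
  exact h1

/-- Passing from `n + d` to `n` changes a binomial coefficient only by a lower order term. -/
lemma choose_add_le (n d j : ℕ) :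
    (n + d).choose (j + 1) ≤ n.choose (j + 1) + d * (n + d) ^ j := by
  induction d with
  | zero => simp
  | succ d ih =>
    rw [← Nat.add_assoc, Nat.choose_succ_succ']
    have h1 : (n + d).choose j ≤ (n + d + 1) ^ j :=
      (Nat.choose_le_pow _ _).trans (Nat.pow_le_pow_left (Nat.le_succ _) _)
    have h2 : d * (n + d) ^ j ≤ d * (n + d + 1) ^ j :=
      Nat.mul_le_mul_left _ (Nat.pow_le_pow_left (Nat.le_succ _) _)
    rw [Nat.add_one_mul]
    omega

/-- If `k` is about `s` and `n ≤ Q * s`, then `C(k, μ)` is at least a constant proportion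
`(2 * Q) ^ (-μ)` of `C(n, μ)`. -/
lemma mul_choose_le {q Q n k μ s : ℕ} (hn : n ≤ Q * s) (hk : s ≤ 2 * (k + 1 - μ)) :
    q * n.choose μ ≤ q * (2 * Q) ^ μ * k.choose μ := by
  rw [Nat.mul_assoc]
  apply Nat.mul_le_mul_left
  refine Nat.le_of_mul_le_mul_left ?_ (Nat.factorial_pos μ)
  calc μ.factorial * n.choose μ = n.descFactorial μ := (Nat.descFactorial_eq_factorial_mul_choose _ _).symm
    _ ≤ n ^ μ := Nat.descFactorial_le_pow _ _
    _ ≤ ((2 * Q) * (k + 1 - μ)) ^ μ := Nat.pow_le_pow_left (by nlinarith) _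
    _ = (2 * Q) ^ μ * (k + 1 - μ) ^ μ := Nat.mul_pow _ _ _
    _ ≤ (2 * Q) ^ μ * k.descFactorial μ := Nat.mul_le_mul_left _ (Nat.pow_sub_le_descFactorial _ _)
    _ = μ.factorial * ((2 * Q) ^ μ * k.choose μ) := by
      rw [Nat.descFactorial_eq_factorial_mul_choose]; ring

/-! ### The structure of families with few missing sets -/

/-- The combinatorial core. If fewer than `2c + 2` tails among the last `2c + 2` points are bad
(`htail`), and the progressions needed for `exists_matching` belong to `F` (`hbulk`), then a shifted
family without an `s`-matching is contained in `Q(m,s,ℓ)`. -/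
lemma Dom.pair {a b a' b' : ℕ} (h : a < b) (h' : a' < b') (ha : a' ≤ a) (hb : b' ≤ b) :
    Dom {a, b} {a', b'} := by
  have h1 : Dom {a} {a'} := Dom.of_le (by simp) (by simpa using ha)
  have h2 : Dom {b} {b'} := Dom.of_le (by simp) (by simpa using hb)
  exact h1.union h2 (by simpa using h.ne) (by simpa using h'.ne)

lemma subset_Qfam {F : Finset (Finset ℕ)} (hF : IsShifted F) {μ c s n L N₀ : ℕ} (hμ : 1 ≤ μ)
    (hc : 2 ≤ c) (hn : n = (μ + 1) * s + c) (hsub : F ⊆ (ground n).powerset)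
    (hM : ¬ HasMatching F s) (hL : 2 * c + 2 ≤ L) (hLs : L ≤ s) (hN₀ : N₀ = (L + 2) * μ)
    (hlarge : N₀ + μ < n - L)
    (htail : ∀ E : ℕ → Finset ℕ, (∀ x < 2 * c + 2, E x ⊆ Ioc (n - (2 * c + 2)) n ∧
      ((E x).card = 1 ∨ (E x).card = 2) ∧ Ioc N₀ (N₀ + μ) ∪ E x ∉ F) →
      ¬ Set.InjOn E (range (2 * c + 2)))
    (hbulk : ∀ lo k, s ≤ k + L → lo + (μ + 1) * k = n - L →
      (range (μ + 1)).image (fun i => lo + (i + 1) * k) ∈ F) :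
    F ⊆ Qfam (μ + 1) s c := by
  have hpos : ∀ E E' X : Finset ℕ, Ioc N₀ (N₀ + μ) ∪ E ∈ F → Dom E E' → (∀ t ∈ E, n - L < t) →
      (∀ t ∈ E', n - L < t) → (∀ x ∈ X, 1 ≤ x ∧ x ≤ N₀ + μ) →
      Dom (Ioc N₀ (N₀ + μ)) X → X ∪ E' ∈ F := by
    intro E E' X h hEE hE hE' hX hYX
    refine hF _ h _ ?_ (Dom.canShiftTo (hYX.union hEE ?_ ?_))
    · rw [Finset.mem_union]
      rintro (h0 | h0)
      · have := hX 0 h0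
        omega
      · have := hE' 0 h0
        omega
    · rw [Finset.disjoint_left]
      intro x h1 h2
      have := Finset.mem_Ioc.1 h1
      have := hE x h2
      omega
    · rw [Finset.disjoint_left]
      intro x h1 h2
      have := hX x h1
      have := hE' x h2
      omega
  have hposY : ∀ E E' : Finset ℕ, Ioc N₀ (N₀ + μ) ∪ E ∈ F → Dom E E' → (∀ t ∈ E, n - L < t) →
      (∀ t ∈ E', n - L < t) → Ioc N₀ (N₀ + μ) ∪ E' ∈ F := by
    intro E E' h hEE hE hE'
    refine hpos E E' _ h hEE hE hE' ?_ (Dom.refl _)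
    intro x hx
    have := Finset.mem_Ioc.1 hx
    omega
  have hposX : ∀ E : Finset ℕ, Ioc N₀ (N₀ + μ) ∪ E ∈ F → (∀ t ∈ E, n - L < t) →
      ∀ X ⊆ Icc 1 N₀, X.card = μ → X ∪ E ∈ F := by
    intro E h hE X hX hXc
    have hX' : ∀ x ∈ X, 1 ≤ x ∧ x ≤ N₀ := fun x hx => Finset.mem_Icc.1 (hX hx)
    refine hpos E E _ h (Dom.refl _) hE hE ?_ (Dom.of_le (by simp [hXc]) ?_)
    · intro x hx
      have := hX' x hx
      omega
    · intro y hy x hx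
      have := hX' x hx
      have := Finset.mem_Ioc.1 hy
      omega
  have hsing : ∀ t t', Ioc N₀ (N₀ + μ) ∪ {t} ∈ F → t' ≤ t → n - L < t' →
      Ioc N₀ (N₀ + μ) ∪ {t'} ∈ F := by
    intro t t' h htt ht'
    refine hposY _ _ h (Dom.of_le (by simp) (by simpa using htt)) ?_ ?_ <;>
      · intro x hx
        rw [Finset.mem_singleton] at hx
        omega
  have hpair : ∀ a b a' b', Ioc N₀ (N₀ + μ) ∪ {a, b} ∈ F → a < b → a' < b' → a' ≤ a → b' ≤ b →
      n - L < a' → Ioc N₀ (N₀ + μ) ∪ {a', b'} ∈ F := by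
    intro a b a' b' h hab hab' ha hb hL
    refine hposY _ _ h (Dom.pair hab hab' ha hb) ?_ ?_ <;>
      · intro x hx
        rw [Finset.mem_insert, Finset.mem_singleton] at hx
        omega
  -- `n - (2c + 1)` is a good singleton: otherwise the last `2c + 2` singletons are all missing.
  have hex : Ioc N₀ (N₀ + μ) ∪ {n - (2 * c + 1)} ∈ F := by
    by_contra hnot
    refine htail (fun x => {n - x}) (fun x hx => ⟨?_, by simp, ?_⟩) ?_
    · intro y hy
      rw [Finset.mem_singleton] at hy
      rw [Finset.mem_Ioc]
      omega
    · intro h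
      exact hnot (hsing _ _ h (by omega) (by omega))
    · intro x hx y hy hxy
      simp only [Finset.coe_range, Set.mem_Iio, Finset.singleton_inj] at hx hy hxy
      omega
  classical
  have hex' : ∃ a, Ioc N₀ (N₀ + μ) ∪ {n - a} ∈ F := ⟨_, hex⟩
  -- `a` counts the bad singletons, which are the last ones.
  obtain ⟨a, hale, ha, hamin⟩ : ∃ a ≤ 2 * c + 1, Ioc N₀ (N₀ + μ) ∪ {n - a} ∈ F ∧
      ∀ x < a, Ioc N₀ (N₀ + μ) ∪ {n - x} ∉ F :=
    ⟨Nat.find hex', Nat.find_min' hex' hex, Nat.find_spec hex', fun x hx => Nat.find_min hex' hx⟩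
  -- The missing tails: `a` singletons, up to `c` pairs `{n - 1 - y, n}`, and possibly
  -- `{n - 2, n - 1}`.
  have hcount : ¬ ((∀ y < c, a + y < 2 * c + 2 → Ioc N₀ (N₀ + μ) ∪ {n - 1 - y, n} ∉ F) ∧
      (a + c < 2 * c + 2 → Ioc N₀ (N₀ + μ) ∪ {n - 2, n - 1} ∉ F) ∧ c < a) := by
    rintro ⟨h1, h2, h3⟩
    refine htail (fun x => if x < a then {n - x} else if x - a < c then {n - 1 - (x - a), n}
      else {n - 2, n - 1}) (fun x hx => ?_) ?_
    · by_cases hxa : x < a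
      · simp only [hxa, if_true]
        refine ⟨?_, by simp, hamin x hxa⟩
        intro y hy
        rw [Finset.mem_singleton] at hy
        rw [Finset.mem_Ioc]
        omega
      · by_cases hxc : x - a < c
        · simp only [hxa, hxc, if_true, if_false]
          refine ⟨?_, Or.inr (Finset.card_pair (by omega)), h1 _ hxc (by omega)⟩
          intro y hy
          rw [Finset.mem_insert, Finset.mem_singleton] at hy
          rw [Finset.mem_Ioc]
          omega
        · simp only [hxa, hxc, if_false]
          refine ⟨?_, Or.inr (Finset.card_pair (by omega)), h2 (by omega)⟩
          intro y hy
          rw [Finset.mem_insert, Finset.mem_singleton] at hy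
          rw [Finset.mem_Ioc]
          omega
    · -- Tails are told apart by their size, their maximum and their minimum.
      have key : ∀ x < 2 * c + 2, ∀ y < 2 * c + 2, x < y →
          (fun x => if x < a then ({n - x} : Finset ℕ) else if x - a < c then {n - 1 - (x - a), n}
            else {n - 2, n - 1}) x ≠ (fun x => if x < a then ({n - x} : Finset ℕ)
            else if x - a < c then {n - 1 - (x - a), n} else {n - 2, n - 1}) y := by
        intro x hx y hy hxy h
        simp only at h
        rw [Finset.ext_iff] at h
        by_cases hya : y < a
        · have hxa : x < a := by omega
          have := h (n - x)
          simp only [hxa, hya, if_true, Finset.mem_singleton, true_iff] at this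
          omega
        · by_cases hyc : y - a < c
          · have e1 := h (n - 1 - (y - a))
            have e2 := h n
            by_cases hxa : x < a
            · simp only [hxa, hya, hyc, if_true, if_false, Finset.mem_singleton,
                Finset.mem_insert, iff_true, true_or, or_true] at e1 e2
              omega
            · have hxc : x - a < c := by omega
              simp only [hxa, hya, hyc, hxc, if_true, if_false, Finset.mem_singleton,
                Finset.mem_insert, iff_true, true_or, or_true] at e1 e2
              omega
          · have e1 := h (n - 1)
            have e2 := h (n - 2)
            have e3 := h n
            by_cases hxa : x < a
            · simp only [hxa, hya, hyc, if_true, if_false, Finset.mem_singleton,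
                Finset.mem_insert, iff_true, true_or, or_true] at e1 e2
              omega
            · have hxc : x - a < c := by omega
              simp only [hxa, hya, hyc, hxc, if_true, if_false, Finset.mem_singleton,
                Finset.mem_insert, true_iff, or_true] at e3
              omega
      intro x hx y hy hxy
      simp only [Finset.coe_range, Set.mem_Iio] at hx hy
      rcases lt_trichotomy x y with h | h | h
      · exact absurd hxy (key x hx y hy h)
      · exact h
      · exact absurd hxy.symm (key y hy x hx h)
  have hnL : L ≤ n := by omega
  by_cases hac : a ≤ 2 * c
  · -- `s` disjoint members exist as soon as `k` disjoint good pairs lie in the last `c + k` points.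
    exfalso
    -- Truncated subtraction: for `a ≤ c` no pair is needed.
    obtain ⟨k, hk⟩ : ∃ k, k = a - c := ⟨_, rfl⟩
    have hpairs : ∀ i < k,
        Ioc N₀ (N₀ + μ) ∪ {n - (c + k) + 1 + i, n - (c + k) + 2 * k - i} ∈ F := by
      intro i hi
      by_contra hnot
      refine hcount ⟨fun y hy _ h => hnot ?_, fun hlt h => hnot ?_, by omega⟩
      · exact hpair _ _ _ _ h (by omega) (by omega) (by omega) (by omega) (by omega)
      · exact hpair _ _ _ _ h (by omega) (by omega) (by omega) (by omega) (by omega)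
    obtain ⟨kb, hkb⟩ : ∃ kb, s = kb + (L - c) := ⟨s - (L - c), by omega⟩
    obtain ⟨r, hr⟩ : ∃ r, r = L - c := ⟨_, rfl⟩
    have hrmul : r * μ ≤ L * μ := Nat.mul_le_mul_right _ (by omega)
    have hN₀' : N₀ = L * μ + 2 * μ := by rw [hN₀]; ring
    have hkbeq : 0 + r * μ + (μ + 1) * kb = n - L := by
      have : (μ + 1) * s = (μ + 1) * kb + r * μ + r := by rw [hkb, ← hr]; ring
      omega
    obtain ⟨M, hMF, hMc, hMd, -⟩ := exists_matching hF (e := 0) (r := r) (N₀ := N₀) hμ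
      (fun x => if x < L - (c + k) then {n - L + 1 + x} else
        {n - (c + k) + 1 + (x - (L - (c + k))), n - (c + k) + 2 * k - (x - (L - (c + k)))})
      (by
        intro i hi t ht
        split_ifs at ht
        · rw [Finset.mem_singleton] at ht
          omega
        · rw [Finset.mem_insert, Finset.mem_singleton] at ht
          omega)
      (by
        intro i hi j hj hij
        rw [Finset.disjoint_left]
        intro x hx hx'
        split_ifs at hx hx' <;>
          simp only [Finset.mem_insert, Finset.mem_singleton] at hx hx' <;> omega)
      (by omega) hkbeq
      (by
        intro i hi
        split_ifs with h
        · refine hposX _ (hsing _ _ ha (by omega) (by omega)) ?_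
          intro t ht
          rw [Finset.mem_singleton] at ht
          omega
        · refine hposX _ (hpairs _ (by omega)) ?_
          intro t ht
          rw [Finset.mem_insert, Finset.mem_singleton] at ht
          omega)
      (hbulk _ _ (by omega) hkbeq)
    exact hM ⟨M, hMF, by omega, hMd⟩
  · have ha' : a = 2 * c + 1 := by omega
    have hlast : Ioc N₀ (N₀ + μ) ∪ {n - 1, n} ∈ F := by
      by_contra hnot
      refine hcount ⟨fun y hy hlt h => hnot ?_, fun hlt => by omega, by omega⟩
      have : y = 0 := by omega
      rw [this] at h
      exact h
    intro P hP
    have hPsub : P ⊆ ground n := Finset.mem_powerset.1 (hsub hP)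
    rw [Qfam, ← hn, Finset.mem_filter, Finset.mem_powerset]
    refine ⟨hPsub, ?_⟩
    have hg : (μ + 1) * s - c - 1 = n - (2 * c + 1) := by omega
    rw [hg]
    by_contra hlt
    push Not at hlt
    exfalso
    apply hM
    have hPm : ∀ x ∈ P, 1 ≤ x ∧ x ≤ n := fun x hx => Finset.mem_Icc.1 (hPsub hx)
    obtain ⟨b, hb⟩ : ∃ b, b = (P ∩ ground (n - (2 * c + 1))).card := ⟨_, rfl⟩
    obtain ⟨q, hq⟩ : ∃ q, q = (P \ ground (n - (2 * c + 1))).card := ⟨_, rfl⟩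
    have hbq : P.card = b + q := by
      rw [hb, hq, Finset.card_inter_add_card_sdiff]
    have hPt : ∀ x ∈ P \ ground (n - (2 * c + 1)), n - (2 * c + 1) < x ∧ x ≤ n := by
      intro x hx
      rw [Finset.mem_sdiff, ground, Finset.mem_Icc] at hx
      have := hPm x hx.1
      omega
    have hq2 : q ≤ 2 * c + 1 := by
      have h1 : P \ ground (n - (2 * c + 1)) ⊆ Ioc (n - (2 * c + 1)) n := fun x hx =>
        Finset.mem_Ioc.2 (hPt x hx)
      have h2 := Finset.card_le_card h1
      rw [Nat.card_Ioc] at h2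
      omega
    obtain ⟨j, hj⟩ : ∃ j, j = q / 2 := ⟨_, rfl⟩
    have hbj : b + j ≤ μ := by omega
    -- `P` is shifted to occupy the first `b` points and the first `q` of the last `2c + 1` points.
    have hP' : Ioc 0 b ∪ Ioc (n - (2 * c + 1)) (n - (2 * c + 1) + q) ∈ F := by
      refine hF P hP _ ?_ (Dom.canShiftTo ?_)
      · simp
      · have h1 : Dom (P ∩ ground (n - (2 * c + 1))) (Ioc 0 b) := by
          have := Dom.compress (A := P ∩ ground (n - (2 * c + 1))) (u := 0)
            (fun x hx => (hPm x (Finset.mem_inter.1 hx).1).1)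
          rwa [← hb, Nat.zero_add] at this
        have h2 : Dom (P \ ground (n - (2 * c + 1)))
            (Ioc (n - (2 * c + 1)) (n - (2 * c + 1) + q)) := by
          have := Dom.compress (A := P \ ground (n - (2 * c + 1))) (u := n - (2 * c + 1))
            (fun x hx => (hPt x hx).1)
          rwa [← hq] at this
        have h3 := h1.union h2 (Finset.disjoint_sdiff_inter _ _).symm (by
          rw [Finset.disjoint_left]
          intro x hx hx'
          rw [Finset.mem_Ioc] at hx hx'
          omega)
        rwa [Finset.union_comm (P ∩ _), Finset.sdiff_union_inter] at h3
    -- Besides `P` there are `L - (2c + 1)` singletons and `c - j` pairs. The first `μ - j ≥ b` points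
    -- are reserved for `P`, which makes the number of remaining points divisible by `μ + 1`.
    obtain ⟨r, hr⟩ : ∃ r, r = L - (c + 1 + j) := ⟨_, rfl⟩
    obtain ⟨kb, hkb⟩ : ∃ kb, s = kb + 1 + r := ⟨s - 1 - r, by omega⟩
    have hrmul : r * μ ≤ L * μ := Nat.mul_le_mul_right _ (by omega)
    have hN₀' : N₀ = L * μ + 2 * μ := by rw [hN₀]; ring
    have hkbeq : (μ - j) + r * μ + (μ + 1) * kb = n - L := by
      have : (μ + 1) * s = (μ + 1) * kb + r * μ + r + μ + 1 := by rw [hkb]; ring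
      omega
    obtain ⟨M, hMF, hMc, hMd, hMm⟩ := exists_matching hF (e := μ - j) (r := r) (N₀ := N₀) hμ
      (fun x => if x < L - (2 * c + 1) then {n - L + 1 + x} else
        {n - 2 * (x - (L - (2 * c + 1))) - 1, n - 2 * (x - (L - (2 * c + 1)))})
      (by
        intro i hi t ht
        split_ifs at ht
        · rw [Finset.mem_singleton] at ht
          omega
        · rw [Finset.mem_insert, Finset.mem_singleton] at ht
          omega)
      (by
        intro i hi j hj hij
        rw [Finset.disjoint_left]
        intro x hx hx'
        split_ifs at hx hx' <;>
          simp only [Finset.mem_insert, Finset.mem_singleton] at hx hx' <;> omega)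
      (by omega) hkbeq
      (by
        intro i hi
        split_ifs with h
        · refine hposX _ (hsing _ _ ha (by omega) (by omega)) ?_
          intro t ht
          rw [Finset.mem_singleton] at ht
          omega
        · refine hposX _ (hpair _ _ _ _ hlast (by omega) (by omega) (by omega) (by omega)
            (by omega)) ?_
          intro t ht
          rw [Finset.mem_insert, Finset.mem_singleton] at ht
          omega)
      (hbulk _ _ (by omega) hkbeq)
    have hdis : ∀ A ∈ M, Disjoint (Ioc 0 b ∪ Ioc (n - (2 * c + 1)) (n - (2 * c + 1) + q)) A := by
      intro A hA
      rw [Finset.disjoint_left]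
      intro x hx hxA
      rw [Finset.mem_union, Finset.mem_Ioc, Finset.mem_Ioc] at hx
      rcases (hMm A hA).2 x hxA with h | ⟨i, hi, h⟩
      · omega
      · split_ifs at h <;> simp only [Finset.mem_insert, Finset.mem_singleton] at h <;> omega
    have hnot : Ioc 0 b ∪ Ioc (n - (2 * c + 1)) (n - (2 * c + 1) + q) ∉ M := by
      intro h
      have h1 := hdis _ h
      rw [disjoint_self] at h1
      exact (hMm _ h).1.ne_empty h1
    -- `P` may be empty, but the members of `M` are not, so the inserted set is new.
    refine ⟨insert _ M, Finset.insert_subset hP' hMF, ?_, ?_⟩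
    · rw [Finset.card_insert_of_notMem hnot]
      omega
    · rw [Finset.coe_insert]
      exact hMd.insert fun A hA _ => hdis A hA

theorem stmt_9 (m c : ℕ) (hm : 2 ≤ m) (hc : 2 ≤ c) :
    ∃ K s0 : ℕ, ∀ s : ℕ, s0 ≤ s →
      ∀ F : Finset (Finset ℕ), F ⊆ (ground (m * s + c)).powerset →
        IsShifted F → ¬ HasMatching F s → ¬ F ⊆ Qfam m s c →
          (2 * c + 2) * (m * s + c).choose (m - 1) ≤
            yF (m * s + c) F m + yF (m * s + c) F (m + 1) + K * s ^ (m - 2) := by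
  obtain ⟨ν, rfl⟩ : ∃ ν, m = ν + 2 := ⟨m - 2, by omega⟩
  obtain ⟨μ, hμ⟩ : ∃ μ, μ = ν + 1 := ⟨_, rfl⟩
  have e1 : ν + 2 = μ + 1 := by omega
  have e2 : μ + 1 - 1 = μ := by omega
  have e3 : μ + 1 - 2 = ν := by omega
  rw [e1, e2, e3]
  set Q := μ + 1 + c with hQ
  -- `L` singleton tails over a positive proportion of the `μ`-sets already exceed the bound.
  set L := (2 * c + 2) * (2 * Q) ^ μ with hL
  set N₀ := (L + 2) * μ with hN₀
  set D := 2 * c + 2 + (N₀ + μ) with hD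
  refine ⟨(2 * c + 2) * (D * Q ^ ν), N₀ + 2 * L + 2 * μ + 2 * c + 2, ?_⟩
  intro s hs F hsub hF hM hnQ
  have hLc : 2 * c + 2 ≤ L := Nat.le_mul_of_pos_right _ (by positivity)
  obtain ⟨n, hn⟩ : ∃ n, n = (μ + 1) * s + c := ⟨_, rfl⟩
  rw [← hn] at hsub ⊢
  have hns : s + c ≤ n := by
    rw [hn, Nat.add_one_mul]; omega
  have hnQs : n ≤ Q * s := by
    have : c * 1 ≤ c * s := Nat.mul_le_mul_left _ (by omega)
    rw [hn, hQ, Nat.add_mul _ c s]; omega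
  by_contra hlt
  push Not at hlt
  refine hnQ (subset_Qfam hF (by omega) hc hn hsub hM hLc (by omega) hN₀ (by omega) ?_ ?_)
  · -- `2c + 2` bad tails, each missing with almost all `μ`-sets, contradict `hlt`.
    intro E hE hinj
    have hcard : ((range (2 * c + 2)).image E).card = 2 * c + 2 := by
      rw [Finset.card_image_of_injOn hinj, Finset.card_range]
    have h1 := card_tails_mul_le (F := F) (T := (range (2 * c + 2)).image E) (μ := μ) (n := n)
      (N := N₀ + μ) (H := n - (2 * c + 2)) (by omega)
      (by
        intro A hA
        obtain ⟨x, hx, rfl⟩ := Finset.mem_image.1 hA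
        have := hE x (Finset.mem_range.1 hx)
        exact ⟨this.1, this.2.1⟩)
      (by
        intro A hA X hX hXc hXF
        obtain ⟨x, hx, rfl⟩ := Finset.mem_image.1 hA
        have h := hE x (Finset.mem_range.1 hx)
        have hX' : ∀ y ∈ X, N₀ + μ < y ∧ y ≤ n - (2 * c + 2) := fun y hy =>
          Finset.mem_Ioc.1 (hX hy)
        have hE' : ∀ y ∈ E x, n - (2 * c + 2) < y ∧ y ≤ n := fun y hy =>
          Finset.mem_Ioc.1 (h.1 hy)
        refine h.2.2 (hF _ hXF _ ?_ (Dom.canShiftTo (Dom.union (Dom.of_le ?_ ?_)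
          (Dom.refl _) ?_ ?_)))
        · rw [Finset.mem_union, Finset.mem_Ioc]
          rintro (h0 | h0)
          · omega
          · have := hE' 0 h0
            omega
        · simp [hXc]
        · intro y hy z hz
          have := hX' y hy
          rw [Finset.mem_Ioc] at hz
          omega
        · rw [Finset.disjoint_left]
          intro y hy hy'
          have := hX' y hy
          have := hE' y hy'
          omega
        · rw [Finset.disjoint_left]
          intro y hy hy'
          have := hE' y hy'
          rw [Finset.mem_Ioc] at hy
          omega)
    rw [hcard] at h1
    obtain ⟨n', hn'⟩ : ∃ n', n = n' + D := ⟨n - D, by omega⟩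
    have h2 := choose_add_le n' D ν
    rw [← hn', ← hμ] at h2
    have h3 : n - (2 * c + 2) - (N₀ + μ) = n' := by omega
    rw [h3] at h1
    have h4 : n ^ ν ≤ Q ^ ν * s ^ ν := by
      rw [← Nat.mul_pow]
      exact Nat.pow_le_pow_left hnQs _
    have h5 : (2 * c + 2) * n.choose μ ≤
        (2 * c + 2) * (n'.choose μ + D * (Q ^ ν * s ^ ν)) :=
      Nat.mul_le_mul_left _ (h2.trans (Nat.add_le_add_left (Nat.mul_le_mul_left _ h4) _))
    have h6 : (2 * c + 2) * (n'.choose μ + D * (Q ^ ν * s ^ ν)) =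
        (2 * c + 2) * n'.choose μ + (2 * c + 2) * (D * Q ^ ν) * s ^ ν := by ring
    have h7 : μ + 1 + 1 = μ + 2 := rfl
    rw [h7] at hlt
    omega
  · -- If the progression is missing, so are all sets `X ∪ {t}` with `X` a `μ`-subset of its last
    -- gap and `t` among the last `L` points.
    intro lo k hk hlo
    by_contra hnot
    have hlo' : lo + μ * k + k = n - L := by rw [← hlo]; ring
    have h1 := card_tails_mul_le (F := F) (T := (Ioc (n - L) n).image (fun t => {t})) (μ := μ)
      (n := n) (N := lo + μ * k) (H := n - L) (by omega)
      (by
        intro A hA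
        obtain ⟨x, hx, rfl⟩ := Finset.mem_image.1 hA
        exact ⟨Finset.singleton_subset_iff.2 hx, by simp⟩)
      (by
        intro A hA X hX hXc hXF
        obtain ⟨t, ht, rfl⟩ := Finset.mem_image.1 hA
        rw [Finset.mem_Ioc] at ht
        have hX' : ∀ y ∈ X, lo + μ * k < y ∧ y ≤ n - L := fun y hy =>
          Finset.mem_Ioc.1 (hX hy)
        have hk0 : 0 < k := by omega
        have inj : Function.Injective (fun i => lo + (i + 1) * k) := by
          intro i j hij
          have := Nat.eq_of_mul_eq_mul_right hk0 (Nat.add_left_cancel hij)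
          omega
        have hsplit : (range (μ + 1)).image (fun i => lo + (i + 1) * k) =
            (range μ).image (fun i => lo + (i + 1) * k) ∪ {lo + (μ + 1) * k} := by
          rw [Finset.range_add_one, Finset.image_insert, Finset.union_comm, Finset.insert_eq]
        refine hnot (hF _ hXF _ ?_ (Dom.canShiftTo ?_))
        · intro h0
          obtain ⟨i, -, hi⟩ := Finset.mem_image.1 h0
          rw [Nat.add_one_mul] at hi
          omega
        · rw [hsplit]
          refine Dom.union (Dom.of_le ?_ ?_) (Dom.of_le (by simp) ?_) ?_ ?_
          · rw [Finset.card_image_of_injective _ inj, hXc, Finset.card_range]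
          · intro y hy z hz
            obtain ⟨i, hi, rfl⟩ := Finset.mem_image.1 hz
            have h2 : (i + 1) * k ≤ μ * k := Nat.mul_le_mul_right _ (Finset.mem_range.1 hi)
            have := hX' y hy
            omega
          · intro y hy z hz
            rw [Finset.mem_singleton] at hy hz
            omega
          · rw [Finset.disjoint_singleton_right]
            intro h
            have := hX' t h
            omega
          · rw [Finset.disjoint_singleton_right]
            intro h
            obtain ⟨i, hi, hi'⟩ := Finset.mem_image.1 h
            have := inj hi'
            rw [Finset.mem_range] at hi
            omega)
    rw [Finset.card_image_of_injective _ Finset.singleton_injective, Nat.card_Ioc] at h1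
    have h3 : n - (n - L) = L := by omega
    have h4 : n - L - (lo + μ * k) = k := by omega
    rw [h3, h4] at h1
    have h2 := mul_choose_le (q := 2 * c + 2) (μ := μ) (k := k) hnQs (by omega)
    rw [← hL] at h2
    have h7 : μ + 1 + 1 = μ + 2 := rfl
    rw [h7] at hlt
    omega
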